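/- arXiv:2201.12744 — 2 statements merged into one kernel-verified Lean document; each statement's English description precedes it below -/
import Mathlib

section
/- Let u be a bounded lower semicontinuous function on Ω_T which is a viscosity supersolution of F(Hw) = e^{∂_t w + G(t,z,w)} g(z) in Ω_T, and let A > osc_{Ω_T} u. Then for every sufficiently large k, the inf-convolution u_k is a viscosity supersolution of F(Hw) = e^{∂_t w + G^k(t,z,w)} g(z) in (A/k, T−A/k) × Ω, where G^k(t,z,r) = sup_{|s| ≤ A/k} G(t+s, z, r). -/
open Filter Topology Set

noncomputable section

/-- The `l`-th elementary symmetric polynomial of `x ∈ ℝⁿ`. -/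
def esym (n l : ℕ) (x : Fin n → ℝ) : ℝ :=
  ∑ s ∈ Finset.powersetCard l (Finset.univ : Finset (Fin n)), ∏ i ∈ s, x i

/-- The cone `Γ_k = {x ∈ ℝⁿ : σ_l(x) > 0 for all 1 ≤ l ≤ k}`. -/
def GammaK (n k : ℕ) : Set (Fin n → ℝ) :=
  {x | ∀ l, 1 ≤ l → l ≤ k → 0 < esym n l x}

/-- `Γ ⊊ ℝⁿ` is an open, convex, symmetric cone with vertex `0` and `Γₙ ⊆ Γ ⊆ Γ₁`. -/
def IsGammaCone (n : ℕ) (Γ : Set (Fin n → ℝ)) : Prop :=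
  IsOpen Γ ∧ Convex ℝ Γ ∧ (∀ x ∈ Γ, ∀ t : ℝ, 0 < t → t • x ∈ Γ) ∧
    (∀ σ : Equiv.Perm (Fin n), ∀ x ∈ Γ, x ∘ σ ∈ Γ) ∧
    Γ ≠ Set.univ ∧ GammaK n n ⊆ Γ ∧ Γ ⊆ GammaK n 1

/-- `f : cl(Γ) → [0,∞)` symmetric, concave, strictly increasing in each variable,
vanishing on `∂Γ`. -/
def IsHessianDensity (n : ℕ) (Γ : Set (Fin n → ℝ)) (f : (Fin n → ℝ) → ℝ) : Prop :=
  (∀ x ∈ closure Γ, 0 ≤ f x) ∧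
    (∀ σ : Equiv.Perm (Fin n), ∀ x ∈ closure Γ, f (x ∘ σ) = f x) ∧
    ConcaveOn ℝ (closure Γ) f ∧
    (∀ x ∈ closure Γ, ∀ y ∈ closure Γ, (∀ i, x i ≤ y i) → x ≠ y → f x < f y) ∧
    (∀ x ∈ frontier Γ, f x = 0)

/-- The complex Hessian `(∂²u/∂z_j∂z̄_k)_{j,k}` of a real-valued function on `ℂⁿ`,
computed from the real second derivative. -/
def complexHessian {n : ℕ} (u : (Fin n → ℂ) → ℝ) (z : Fin n → ℂ) :
    Matrix (Fin n) (Fin n) ℂ := fun j k =>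
  (((iteratedFDeriv ℝ 2 u z ![Pi.single j 1, Pi.single k 1] +
        iteratedFDeriv ℝ 2 u z ![Pi.single j Complex.I, Pi.single k Complex.I]) / 4 : ℝ) : ℂ) +
    Complex.I *
      (((iteratedFDeriv ℝ 2 u z ![Pi.single j 1, Pi.single k Complex.I] -
          iteratedFDeriv ℝ 2 u z ![Pi.single j Complex.I, Pi.single k 1]) / 4 : ℝ) : ℂ)

open Classical in
/-- `F(H) = f(λ(H))` if `λ(H) ∈ cl(Γ)` and `F(H) = −∞` otherwise. -/
def Fop {n : ℕ} (f : (Fin n → ℝ) → ℝ) (Γ : Set (Fin n → ℝ))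
    (A : Matrix (Fin n) (Fin n) ℂ) : EReal :=
  if h : A.IsHermitian then
    if h.eigenvalues ∈ closure Γ then ((f h.eigenvalues : ℝ) : EReal) else ⊥
  else ⊥

/-- An upper test function (C¹ in t, C² in z near `p₀`) for `u` at `p₀`. -/
def IsUpperTestAt {n : ℕ} (u q : ℝ × (Fin n → ℂ) → ℝ) (p₀ : ℝ × (Fin n → ℂ)) : Prop :=
  q p₀ = u p₀ ∧ (∀ᶠ p in 𝓝 p₀, u p ≤ q p) ∧
    ∀ᶠ p in 𝓝 p₀, DifferentiableAt ℝ (fun t => q (t, p.2)) p.1 ∧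
      ContDiffAt ℝ 2 (fun z => q (p.1, z)) p.2

/-- A lower test function (C¹ in t, C² in z near `p₀`) for `v` at `p₀`. -/
def IsLowerTestAt {n : ℕ} (v q : ℝ × (Fin n → ℂ) → ℝ) (p₀ : ℝ × (Fin n → ℂ)) : Prop :=
  q p₀ = v p₀ ∧ (∀ᶠ p in 𝓝 p₀, q p ≤ v p) ∧
    ∀ᶠ p in 𝓝 p₀, DifferentiableAt ℝ (fun t => q (t, p.2)) p.1 ∧
      ContDiffAt ℝ 2 (fun z => q (p.1, z)) p.2

/-- Viscosity subsolution of `F(Hw) = e^{∂ₜw + G(t,z,w)} g(z)` on `D`. -/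
def ParSubsolOn {n : ℕ} (f : (Fin n → ℝ) → ℝ) (Γ : Set (Fin n → ℝ))
    (G : ℝ → (Fin n → ℂ) → ℝ → ℝ) (g : (Fin n → ℂ) → ℝ)
    (D : Set (ℝ × (Fin n → ℂ))) (u : ℝ × (Fin n → ℂ) → ℝ) : Prop :=
  UpperSemicontinuousOn u D ∧
    ∀ p₀ ∈ D, ∀ q, IsUpperTestAt u q p₀ →
      ((Real.exp (deriv (fun t => q (t, p₀.2)) p₀.1 + G p₀.1 p₀.2 (q p₀)) * g p₀.2 : ℝ) : EReal)
        ≤ Fop f Γ (complexHessian (fun z => q (p₀.1, z)) p₀.2)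

/-- Viscosity supersolution of `F(Hw) = e^{∂ₜw + G(t,z,w)} g(z)` on `D`. -/
def ParSupersolOn {n : ℕ} (f : (Fin n → ℝ) → ℝ) (Γ : Set (Fin n → ℝ))
    (G : ℝ → (Fin n → ℂ) → ℝ → ℝ) (g : (Fin n → ℂ) → ℝ)
    (D : Set (ℝ × (Fin n → ℂ))) (v : ℝ × (Fin n → ℂ) → ℝ) : Prop :=
  LowerSemicontinuousOn v D ∧
    ∀ p₀ ∈ D, ∀ q, IsLowerTestAt v q p₀ →
      Fop f Γ (complexHessian (fun z => q (p₀.1, z)) p₀.2)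
        ≤ ((Real.exp (deriv (fun t => q (t, p₀.2)) p₀.1 + G p₀.1 p₀.2 (q p₀)) * g p₀.2 : ℝ) : EReal)

/-- Upper semicontinuous envelope relative to `D`. -/
def uscEnvOn {X : Type*} [TopologicalSpace X] (D : Set X) (w : X → ℝ) (x : X) : ℝ :=
  Filter.limsup w (𝓝[D] x)

/-- Lower semicontinuous envelope relative to `D`. -/
def lscEnvOn {X : Type*} [TopologicalSpace X] (D : Set X) (w : X → ℝ) (x : X) : ℝ :=
  Filter.liminf w (𝓝[D] x)

/-- Sup-convolution in time `u^k`. -/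
def supConv {n : ℕ} (u : ℝ × (Fin n → ℂ) → ℝ) (A k : ℝ) (p : ℝ × (Fin n → ℂ)) : ℝ :=
  sSup ((fun s : ℝ => u (p.1 + s, p.2) - k * |s|) '' Set.Icc (-(A / k)) (A / k))

/-- Inf-convolution in time `u_k`. -/
def infConv {n : ℕ} (u : ℝ × (Fin n → ℂ) → ℝ) (A k : ℝ) (p : ℝ × (Fin n → ℂ)) : ℝ :=
  sInf ((fun s : ℝ => u (p.1 + s, p.2) + k * |s|) '' Set.Icc (-(A / k)) (A / k))

/-- Parabolic superjet `𝒫^{2,+} u (p₀)`; `p` and `Q` are the ℝ-linear first- and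
second-order data on `ℂⁿ ≅ ℝ^{2n}`. -/
def InParSuperjet {n : ℕ} (u : ℝ × (Fin n → ℂ) → ℝ) (p₀ : ℝ × (Fin n → ℂ)) (τ : ℝ)
    (p : (Fin n → ℂ) →ₗ[ℝ] ℝ) (Q : (Fin n → ℂ) →ₗ[ℝ] (Fin n → ℂ) →ₗ[ℝ] ℝ) : Prop :=
  ∀ ε > 0, ∀ᶠ x in 𝓝 p₀,
    u x ≤ u p₀ + τ * (x.1 - p₀.1) + p (x.2 - p₀.2) +
      (1 / 2) * Q (x.2 - p₀.2) (x.2 - p₀.2) + ε * (|x.1 - p₀.1| + ‖x.2 - p₀.2‖ ^ 2)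

/-- Parabolic subjet `𝒫^{2,−} v (p₀) = −𝒫^{2,+}(−v)(p₀)`. -/
def InParSubjet {n : ℕ} (v : ℝ × (Fin n → ℂ) → ℝ) (p₀ : ℝ × (Fin n → ℂ)) (τ : ℝ)
    (p : (Fin n → ℂ) →ₗ[ℝ] ℝ) (Q : (Fin n → ℂ) →ₗ[ℝ] (Fin n → ℂ) →ₗ[ℝ] ℝ) : Prop :=
  InParSuperjet (fun x => -(v x)) p₀ (-τ) (-p) (-Q)

/-- An upper test function (C² near `z₀`) for `ψ` at `z₀` (elliptic case). -/
def IsUpperTestAtE {n : ℕ} (ψ q : (Fin n → ℂ) → ℝ) (z₀ : Fin n → ℂ) : Prop :=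
  q z₀ = ψ z₀ ∧ (∀ᶠ z in 𝓝 z₀, ψ z ≤ q z) ∧ ContDiffAt ℝ 2 q z₀

/-- A lower test function (C² near `z₀`) for `ψ` at `z₀` (elliptic case). -/
def IsLowerTestAtE {n : ℕ} (ψ q : (Fin n → ℂ) → ℝ) (z₀ : Fin n → ℂ) : Prop :=
  q z₀ = ψ z₀ ∧ (∀ᶠ z in 𝓝 z₀, q z ≤ ψ z) ∧ ContDiffAt ℝ 2 q z₀

/-- `ψ` is `Γ`-subharmonic on `D` in the viscosity sense: `F(Hψ) ≥ 0`. -/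
def GammaSubharmonicOn {n : ℕ} (Γ : Set (Fin n → ℝ)) (D : Set (Fin n → ℂ))
    (ψ : (Fin n → ℂ) → ℝ) : Prop :=
  ∀ z₀ ∈ D, ∀ q, IsUpperTestAtE ψ q z₀ →
    ∃ hh : (complexHessian q z₀).IsHermitian, hh.eigenvalues ∈ closure Γ

/-- Viscosity subsolution of the elliptic equation `e^{K(z,ψ)} − F(Hψ) = 0` on `D`,
where the right-hand side `K z₀ (q z₀)` may depend on the tested value. -/
def EllSubsolOn {n : ℕ} (f : (Fin n → ℝ) → ℝ) (Γ : Set (Fin n → ℝ))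
    (K : (Fin n → ℂ) → ℝ → ℝ) (D : Set (Fin n → ℂ)) (ψ : (Fin n → ℂ) → ℝ) : Prop :=
  UpperSemicontinuousOn ψ D ∧
    ∀ z₀ ∈ D, ∀ q, IsUpperTestAtE ψ q z₀ →
      ((K z₀ (q z₀) : ℝ) : EReal) ≤ Fop f Γ (complexHessian q z₀)

/-- Viscosity subsolution of the time-derivative-free parabolic equation
`e^{H(t,z,w)} h(t,z) − F(Hw) = 0` on `D`. -/
def ParSubsolNoDtOn {n : ℕ} (f : (Fin n → ℝ) → ℝ) (Γ : Set (Fin n → ℝ))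
    (Hf : ℝ → (Fin n → ℂ) → ℝ → ℝ) (h : ℝ × (Fin n → ℂ) → ℝ)
    (D : Set (ℝ × (Fin n → ℂ))) (w : ℝ × (Fin n → ℂ) → ℝ) : Prop :=
  UpperSemicontinuousOn w D ∧
    ∀ p₀ ∈ D, ∀ q, IsUpperTestAt w q p₀ →
      ((Real.exp (Hf p₀.1 p₀.2 (q p₀)) * h p₀ : ℝ) : EReal)
        ≤ Fop f Γ (complexHessian (fun z => q (p₀.1, z)) p₀.2)

/-- Subsolution of the Cauchy–Dirichlet problem. -/
def CDSubsol {n : ℕ} (f : (Fin n → ℝ) → ℝ) (Γ : Set (Fin n → ℝ))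
    (G : ℝ → (Fin n → ℂ) → ℝ → ℝ) (g : (Fin n → ℂ) → ℝ)
    (Ω : Set (Fin n → ℂ)) (T : ℝ) (φ : ℝ → (Fin n → ℂ) → ℝ)
    (u₀ : (Fin n → ℂ) → ℝ) (u : ℝ × (Fin n → ℂ) → ℝ) : Prop :=
  UpperSemicontinuousOn u (Set.Ico 0 T ×ˢ closure Ω) ∧
    ParSubsolOn f Γ G g (Set.Ioo 0 T ×ˢ Ω) u ∧
    (∀ t ∈ Set.Ico (0 : ℝ) T, ∀ z ∈ frontier Ω, u (t, z) ≤ φ t z) ∧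
    (∀ z ∈ closure Ω, u (0, z) ≤ u₀ z)

/-- Supersolution of the Cauchy–Dirichlet problem. -/
def CDSupersol {n : ℕ} (f : (Fin n → ℝ) → ℝ) (Γ : Set (Fin n → ℝ))
    (G : ℝ → (Fin n → ℂ) → ℝ → ℝ) (g : (Fin n → ℂ) → ℝ)
    (Ω : Set (Fin n → ℂ)) (T : ℝ) (φ : ℝ → (Fin n → ℂ) → ℝ)
    (u₀ : (Fin n → ℂ) → ℝ) (v : ℝ × (Fin n → ℂ) → ℝ) : Prop :=
  LowerSemicontinuousOn v (Set.Ico 0 T ×ˢ closure Ω) ∧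
    ParSupersolOn f Γ G g (Set.Ioo 0 T ×ˢ Ω) v ∧
    (∀ t ∈ Set.Ico (0 : ℝ) T, ∀ z ∈ frontier Ω, φ t z ≤ v (t, z)) ∧
    (∀ z ∈ closure Ω, u₀ z ≤ v (0, z))

/-- `ε`-subbarrier for the Cauchy–Dirichlet problem. -/
def SubBarrier {n : ℕ} (f : (Fin n → ℝ) → ℝ) (Γ : Set (Fin n → ℝ))
    (G : ℝ → (Fin n → ℂ) → ℝ → ℝ) (g : (Fin n → ℂ) → ℝ)
    (Ω : Set (Fin n → ℂ)) (T : ℝ) (φ : ℝ → (Fin n → ℂ) → ℝ)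
    (u₀ : (Fin n → ℂ) → ℝ) (ε : ℝ) (u : ℝ × (Fin n → ℂ) → ℝ) : Prop :=
  UpperSemicontinuousOn u (Set.Ico 0 T ×ˢ closure Ω) ∧
    ParSubsolOn f Γ G g (Set.Ioo 0 T ×ˢ Ω) u ∧
    (∀ z ∈ closure Ω,
      u₀ z - ε ≤ lscEnvOn (Set.Ico 0 T ×ˢ closure Ω) u (0, z) ∧
        lscEnvOn (Set.Ico 0 T ×ˢ closure Ω) u (0, z) ≤ u (0, z) ∧ u (0, z) ≤ u₀ z) ∧
    (∀ t ∈ Set.Ico (0 : ℝ) T, ∀ z ∈ frontier Ω,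
      φ t z - ε ≤ lscEnvOn (Set.Ico 0 T ×ˢ closure Ω) u (t, z) ∧
        lscEnvOn (Set.Ico 0 T ×ˢ closure Ω) u (t, z) ≤ u (t, z) ∧ u (t, z) ≤ φ t z)

/-- `ε`-superbarrier for the Cauchy–Dirichlet problem. -/
def SuperBarrier {n : ℕ} (f : (Fin n → ℝ) → ℝ) (Γ : Set (Fin n → ℝ))
    (G : ℝ → (Fin n → ℂ) → ℝ → ℝ) (g : (Fin n → ℂ) → ℝ)
    (Ω : Set (Fin n → ℂ)) (T : ℝ) (φ : ℝ → (Fin n → ℂ) → ℝ)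
    (u₀ : (Fin n → ℂ) → ℝ) (ε : ℝ) (v : ℝ × (Fin n → ℂ) → ℝ) : Prop :=
  LowerSemicontinuousOn v (Set.Ico 0 T ×ˢ closure Ω) ∧
    ParSupersolOn f Γ G g (Set.Ioo 0 T ×ˢ Ω) v ∧
    (∀ z ∈ closure Ω,
      uscEnvOn (Set.Ico 0 T ×ˢ closure Ω) v (0, z) ≤ u₀ z + ε ∧
        v (0, z) ≤ uscEnvOn (Set.Ico 0 T ×ˢ closure Ω) v (0, z) ∧ u₀ z ≤ v (0, z)) ∧
    (∀ t ∈ Set.Ico (0 : ℝ) T, ∀ z ∈ frontier Ω,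
      uscEnvOn (Set.Ico 0 T ×ˢ closure Ω) v (t, z) ≤ φ t z + ε ∧
        v (t, z) ≤ uscEnvOn (Set.Ico 0 T ×ˢ closure Ω) v (t, z) ∧ φ t z ≤ v (t, z))

/-- Lipschitz in the time variable, uniformly on `[0,T) × cl(Ω)`. -/
def LipschitzInT {n : ℕ} (Ω : Set (Fin n → ℂ)) (T : ℝ) (u : ℝ × (Fin n → ℂ) → ℝ) : Prop :=
  ∃ L : ℝ, ∀ t₁ ∈ Set.Ico (0 : ℝ) T, ∀ t₂ ∈ Set.Ico (0 : ℝ) T, ∀ z ∈ closure Ω,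
    |u (t₁, z) - u (t₂, z)| ≤ L * |t₁ - t₂|

/-- The pair `(u₀, g)` is admissible. -/
def Admissible {n : ℕ} (f : (Fin n → ℝ) → ℝ) (Γ : Set (Fin n → ℝ))
    (Ω : Set (Fin n → ℂ)) (g u₀ : (Fin n → ℂ) → ℝ) : Prop :=
  ∀ ε > 0, ∃ uε : (Fin n → ℂ) → ℝ, ∃ Cε > 0,
    ContinuousOn uε (closure Ω) ∧ (∀ z ∈ closure Ω, u₀ z ≤ uε z ∧ uε z ≤ u₀ z + ε) ∧
      ∀ z₀ ∈ Ω, ∀ q, IsLowerTestAtE uε q z₀ →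
        Fop f Γ (complexHessian q z₀) ≤ ((Real.exp Cε * g z₀ : ℝ) : EReal)

/-- `Ω` is a strictly `Γ`-pseudoconvex domain. -/
def StrictlyGammaPseudoconvex {n : ℕ} (Γ : Set (Fin n → ℝ)) (Ω : Set (Fin n → ℂ)) : Prop :=
  ∃ ρ : (Fin n → ℂ) → ℝ, ContDiff ℝ (⊤ : ℕ∞) ρ ∧
    (∀ z ∈ closure Ω, ∃ hh : (complexHessian ρ z).IsHermitian, hh.eigenvalues ∈ Γ) ∧
    (∀ z ∈ frontier Ω, ρ z = 0) ∧ (∀ z ∈ Ω, ρ z < 0) ∧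
    ∀ z ∈ frontier Ω, fderiv ℝ ρ z ≠ 0

end

/-!
The infimum defining `u_k` at `p₀ = (t₀, z₀)` is attained at some shift `s`, by lower
semicontinuity. If `q` touches `u_k` from below at `p₀`, then `(t, z) ↦ q (t - s, z) - k|s|`
touches `u` from below at `(t₀ + s, z₀)`, with the same time derivative and the same complex
Hessian as `q` at `p₀`. Testing `u` with it bounds `F(Hq)` in terms of
`G (t₀ + s) z₀ (q p₀ - k|s|)`, which is at most `G (t₀ + s) z₀ (q p₀)` by monotonicity, hence at
most `G^k`.
-/

theorem lowerSemicontinuousOn_sInf_image {X Y γ : Type*} [TopologicalSpace X] [TopologicalSpace Y]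
    [ConditionallyCompleteLinearOrder γ] [DenselyOrdered γ] {φ : X → Y → γ} {S : Set X} {K : Set Y}
    (hK : IsCompact K) (hne : K.Nonempty)
    (hφ : LowerSemicontinuousOn (Function.uncurry φ) (S ×ˢ K)) :
    LowerSemicontinuousOn (fun x => sInf (φ x '' K)) S := by
  intro x hx y hy
  obtain ⟨y', hyy', hy'⟩ := exists_between hy
  have hslice : LowerSemicontinuousOn (φ x) K :=
    hφ.comp (Continuous.prodMk_right x).continuousOn fun s hs => ⟨hx, hs⟩
  have hbdd : BddBelow (φ x '' K) :=
    have : Nonempty γ := ⟨y⟩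
    hslice.bddBelow_of_isCompact hK
  have hnear : ∀ᶠ x' in 𝓝 x, ∀ s ∈ K, x' ∈ S → s ∈ K → y' < φ x' s :=
    hK.eventually_forall_of_forall_eventually fun s hs =>
      (eventually_nhdsWithin_iff.1 <| hφ (x, s) ⟨hx, hs⟩ y' <|
        hy'.trans_le (csInf_le hbdd (mem_image_of_mem _ hs))).mono fun _ h hS hs' => h ⟨hS, hs'⟩
  filter_upwards [hnear.filter_mono nhdsWithin_le_nhds, self_mem_nhdsWithin] with x' hlt hx'
  exact hyy'.trans_le <|
    le_csInf (hne.image _) (forall_mem_image.2 fun s hs => (hlt s hs hx' hs).le)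

theorem isLeast_sInf_image {Y γ : Type*} [TopologicalSpace Y] [ConditionallyCompleteLinearOrder γ]
    {φ : Y → γ} {K : Set Y} (hK : IsCompact K) (hne : K.Nonempty)
    (hφ : LowerSemicontinuousOn φ K) : IsLeast (φ '' K) (sInf (φ '' K)) := by
  obtain ⟨s, hs, hmin⟩ := hφ.exists_isMinOn hne hK
  have hleast : IsLeast (φ '' K) (φ s) := ⟨mem_image_of_mem φ hs, forall_mem_image.2 hmin⟩
  rwa [hleast.csInf_eq]

theorem pos_of_sSup_sub_sInf_lt {α : Type*} {u : α → ℝ} {D : Set α} {A : ℝ}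
    (hbd : ∃ C, ∀ p ∈ D, |u p| ≤ C) (hA : sSup (u '' D) - sInf (u '' D) < A) : 0 < A := by
  have hbounded : Bornology.IsBounded (u '' D) :=
    isBounded_iff_forall_norm_le.2 <| by
      simpa only [forall_mem_image, Real.norm_eq_abs] using hbd
  obtain ⟨hbelow, habove⟩ := isBounded_iff_bddBelow_bddAbove.1 hbounded
  exact (sub_nonneg.2 (Real.sInf_le_sSup _ hbelow habove)).trans_lt hA

theorem complexHessian_sub_const {n : ℕ} (u : (Fin n → ℂ) → ℝ) (c : ℝ) (z : Fin n → ℂ) :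
    complexHessian (fun z' => u z' - c) z = complexHessian u z := by
  have hfderiv : fderiv ℝ (fun z' => u z' - c) = fderiv ℝ u := funext fun _ => fderiv_sub_const c
  ext j k
  simp only [complexHessian, iteratedFDeriv_two_apply, hfderiv]

section TimeErosion

variable {X : Type*} {D : Set (ℝ × X)} {r : ℝ}

/-- The erosion of `D ⊆ ℝ × X` by the time segment `[-r, r]`: the points all of whose time shifts
by at most `r` lie in `D`. It is the set on which a convolution in time of radius `r` of a function
on `D` makes sense. -/
def timeErosion (D : Set (ℝ × X)) (r : ℝ) : Set (ℝ × X) :=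
  {p | ∀ s ∈ Icc (-r) r, (p.1 + s, p.2) ∈ D}

theorem Ioo_prod_subset_timeErosion (a b : ℝ) (Ω : Set X) :
    Ioo (a + r) (b - r) ×ˢ Ω ⊆ timeErosion (Ioo a b ×ˢ Ω) r :=
  fun _ hp _ hs => ⟨⟨by linarith [hp.1.1, hs.1], by linarith [hp.1.2, hs.2]⟩, hp.2⟩

variable [TopologicalSpace X]

theorem isOpen_timeErosion (hD : IsOpen D) : IsOpen (timeErosion D r) :=
  isOpen_iff_eventually.2 fun p hp =>
    isCompact_Icc.eventually_forall_of_forall_eventually fun s hs =>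
      (Continuous.tendsto (by fun_prop : Continuous fun x : (ℝ × X) × ℝ => (x.1.1 + x.2, x.1.2))
        (p, s)).eventually (hD.mem_nhds (hp s hs))

theorem lowerSemicontinuousOn_timeShift_add_mul_abs {u : ℝ × X → ℝ} (hu : LowerSemicontinuousOn u D)
    (k : ℝ) :
    LowerSemicontinuousOn (Function.uncurry fun (p : ℝ × X) s => u (p.1 + s, p.2) + k * |s|)
      (timeErosion D r ×ˢ Icc (-r) r) := by
  have hshift : Continuous fun x : (ℝ × X) × ℝ => (x.1.1 + x.2, x.1.2) := by fun_prop
  have habs : Continuous fun x : (ℝ × X) × ℝ => k * |x.2| := by fun_prop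
  exact (hu.comp hshift.continuousOn fun x hx => hx.1 x.2 hx.2).add
    (habs.lowerSemicontinuous.lowerSemicontinuousOn _)

end TimeErosion

section InfConvolution

variable {n : ℕ} {D : Set (ℝ × (Fin n → ℂ))} {u : ℝ × (Fin n → ℂ) → ℝ} {A k : ℝ}
  {p : ℝ × (Fin n → ℂ)}

theorem lowerSemicontinuousOn_infConv (hu : LowerSemicontinuousOn u D) (hr : 0 ≤ A / k) :
    LowerSemicontinuousOn (infConv u A k) (timeErosion D (A / k)) :=
  lowerSemicontinuousOn_sInf_image isCompact_Icc (nonempty_Icc.2 (neg_le_self hr))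
    (lowerSemicontinuousOn_timeShift_add_mul_abs hu k)

theorem isLeast_infConv (hu : LowerSemicontinuousOn u D) (hr : 0 ≤ A / k)
    (hp : p ∈ timeErosion D (A / k)) :
    IsLeast ((fun s : ℝ => u (p.1 + s, p.2) + k * |s|) '' Icc (-(A / k)) (A / k))
      (infConv u A k p) :=
  isLeast_sInf_image isCompact_Icc (nonempty_Icc.2 (neg_le_self hr)) <|
    (lowerSemicontinuousOn_timeShift_add_mul_abs hu k).comp
      (Continuous.prodMk_right p).continuousOn fun _ hs => ⟨hp, hs⟩

theorem IsLowerTestAt.timeShift_sub_const {v w q : ℝ × (Fin n → ℂ) → ℝ} {s c : ℝ}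
    (hq : IsLowerTestAt w q p) (heq : w p = v (p.1 + s, p.2) + c)
    (hle : ∀ᶠ x in 𝓝 p, w x ≤ v (x.1 + s, x.2) + c) :
    IsLowerTestAt v (fun x => q (x.1 - s, x.2) - c) (p.1 + s, p.2) := by
  obtain ⟨hqp, hqw, hreg⟩ := hq
  have hshift : Tendsto (fun x : ℝ × (Fin n → ℂ) => (x.1 - s, x.2)) (𝓝 (p.1 + s, p.2)) (𝓝 p) :=
    Continuous.tendsto' (by fun_prop) _ _ (by simp only [add_sub_cancel_right])
  refine ⟨?_, ?_, ?_⟩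
  · simp only [add_sub_cancel_right, hqp, heq]
  · filter_upwards [hshift.eventually (hqw.and hle)] with x ⟨hqx, hwx⟩
    simp only [sub_add_cancel] at hwx
    linarith
  · filter_upwards [hshift.eventually hreg] with x ⟨htime, hspace⟩
    exact ⟨(htime.comp x.1 (differentiableAt_id.sub_const s)).sub_const c,
      hspace.sub contDiffAt_const⟩

theorem IsLowerTestAt.exists_timeShift_of_infConv {q : ℝ × (Fin n → ℂ) → ℝ} (hD : IsOpen D)
    (hu : LowerSemicontinuousOn u D) (hr : 0 ≤ A / k) (hp : p ∈ timeErosion D (A / k))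
    (hq : IsLowerTestAt (infConv u A k) q p) :
    ∃ s ∈ Icc (-(A / k)) (A / k),
      IsLowerTestAt u (fun x => q (x.1 - s, x.2) - k * |s|) (p.1 + s, p.2) := by
  obtain ⟨s, hs, hmin⟩ := (isLeast_infConv hu hr hp).1
  refine ⟨s, hs, hq.timeShift_sub_const hmin.symm ?_⟩
  filter_upwards [(isOpen_timeErosion hD).mem_nhds hp] with x hx
  exact (isLeast_infConv hu hr hx).2 (mem_image_of_mem _ hs)

end InfConvolution

section Supersolution

variable {n : ℕ} {Γ : Set (Fin n → ℝ)} {f : (Fin n → ℝ) → ℝ} {G : ℝ → (Fin n → ℂ) → ℝ → ℝ}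
  {g : (Fin n → ℂ) → ℝ} {D : Set (ℝ × (Fin n → ℂ))} {u : ℝ × (Fin n → ℂ) → ℝ}

theorem ParSupersolOn.mono {D' : Set (ℝ × (Fin n → ℂ))} (hu : ParSupersolOn f Γ G g D u)
    (hD : D' ⊆ D) : ParSupersolOn f Γ G g D' u :=
  ⟨hu.1.mono hD, fun p hp => hu.2 p (hD hp)⟩

theorem ParSupersolOn.fop_le_of_timeShift {q : ℝ × (Fin n → ℂ) → ℝ} {p : ℝ × (Fin n → ℂ)} {s c : ℝ}
    (hu : ParSupersolOn f Γ G g D u) (hp : (p.1 + s, p.2) ∈ D)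
    (hq : IsLowerTestAt u (fun x => q (x.1 - s, x.2) - c) (p.1 + s, p.2)) :
    Fop f Γ (complexHessian (fun z => q (p.1, z)) p.2) ≤
      ((Real.exp (deriv (fun t => q (t, p.2)) p.1 + G (p.1 + s) p.2 (q p - c)) * g p.2 : ℝ) :
        EReal) := by
  have htest := hu.2 _ hp _ hq
  have hderiv :
      deriv (fun t => q (t - s, p.2) - c) (p.1 + s) = deriv (fun t => q (t, p.2)) p.1 := by
    rw [deriv_sub_const, deriv_comp_sub_const (fun t => q (t, p.2)), add_sub_cancel_right]
  simpa only [add_sub_cancel_right, hderiv, complexHessian_sub_const] using htest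

theorem stmt11_general {A k : ℝ} (hD : IsOpen D)
    (hGt : ∀ z c, UpperSemicontinuousOn (fun t => G t z c) {t | (t, z) ∈ D})
    (hGm : ∀ p ∈ D, Monotone (G p.1 p.2)) (hg : ∀ p ∈ D, 0 ≤ g p.2)
    (hu : ParSupersolOn f Γ G g D u) (hA : 0 ≤ A) (hk : 0 < k) :
    ParSupersolOn f Γ
      (fun t z c => sSup ((fun s : ℝ => G (t + s) z c) '' Icc (-(A / k)) (A / k))) g
      (timeErosion D (A / k)) (infConv u A k) := by
  have hr : 0 ≤ A / k := div_nonneg hA hk.le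
  refine ⟨lowerSemicontinuousOn_infConv hu.1 hr, fun p hp q hq => ?_⟩
  obtain ⟨s, hs, htest⟩ := hq.exists_timeShift_of_infConv hD hu.1 hr hp
  refine (hu.fop_le_of_timeShift (hp s hs) htest).trans (EReal.coe_le_coe_iff.2 ?_)
  have hgp : 0 ≤ g p.2 := hg (p.1 + s, p.2) (hp s hs)
  have hbdd : BddAbove ((fun s : ℝ => G (p.1 + s) p.2 (q p)) '' Icc (-(A / k)) (A / k)) :=
    ((hGt p.2 (q p)).comp (continuous_const_add p.1).continuousOn hp).bddAbove_of_isCompact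
      isCompact_Icc
  have hG : G (p.1 + s) p.2 (q p - k * |s|) ≤
      sSup ((fun s : ℝ => G (p.1 + s) p.2 (q p)) '' Icc (-(A / k)) (A / k)) :=
    calc G (p.1 + s) p.2 (q p - k * |s|)
        ≤ G (p.1 + s) p.2 (q p) := hGm _ (hp s hs) (sub_le_self _ (by positivity))
      _ ≤ _ := le_csSup hbdd (mem_image_of_mem _ hs)
  gcongr

end Supersolution

/-- for k large, the inf-convolution u_k is a supersolution with G replaced by G^k. -/
theorem stmt11
    {n : ℕ} (hn : 1 ≤ n) (Γ : Set (Fin n → ℝ)) (f : (Fin n → ℝ) → ℝ)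
    (hΓ : IsGammaCone n Γ) (hf : IsHessianDensity n Γ f)
    (Ω : Set (Fin n → ℂ)) (hΩo : IsOpen Ω) (hΩb : Bornology.IsBounded Ω)
    (hΩc : IsConnected Ω) (T : ℝ) (hT : 0 < T)
    (G : ℝ → (Fin n → ℂ) → ℝ → ℝ)
    (hGc : ContinuousOn (fun p : ℝ × (Fin n → ℂ) × ℝ => G p.1 p.2.1 p.2.2)
      (Set.Icc 0 T ×ˢ closure Ω ×ˢ Set.univ))
    (hGm : ∀ t z, Monotone (fun r => G t z r))
    (g : (Fin n → ℂ) → ℝ) (hgc : ContinuousOn g Ω)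
    (hg0 : ∀ z ∈ Ω, 0 ≤ g z) (hgb : ∃ C, ∀ z ∈ Ω, g z ≤ C)
    (u : ℝ × (Fin n → ℂ) → ℝ)
    (hbd : ∃ C, ∀ p ∈ Set.Ioo 0 T ×ˢ Ω, |u p| ≤ C)
    (hsup : ParSupersolOn f Γ G g (Set.Ioo 0 T ×ˢ Ω) u)
    (A : ℝ)
    (hA : sSup (u '' (Set.Ioo 0 T ×ˢ Ω)) - sInf (u '' (Set.Ioo 0 T ×ˢ Ω)) < A) :
    ∃ k₀ : ℝ, ∀ k : ℝ, k₀ ≤ k →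
      ParSupersolOn f Γ
        (fun t z r => sSup ((fun s : ℝ => G (t + s) z r) '' Set.Icc (-(A / k)) (A / k))) g
        (Set.Ioo (A / k) (T - A / k) ×ˢ Ω) (infConv u A k) := by
  have hGt (z c) : UpperSemicontinuousOn (fun t => G t z c) {t | (t, z) ∈ Ioo 0 T ×ˢ Ω} :=
    (hGc.comp (by fun_prop : Continuous fun t : ℝ => (t, z, c)).continuousOn fun _ ht =>
      ⟨Ioo_subset_Icc_self ht.1, subset_closure ht.2, trivial⟩).upperSemicontinuousOn
  refine ⟨1, fun k hk => ?_⟩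
  have hsup' := stmt11_general (isOpen_Ioo.prod hΩo) hGt (fun p _ => hGm p.1 p.2)
    (fun p hp => hg0 p.2 hp.2) hsup (pos_of_sSup_sub_sInf_lt hbd hA).le (one_pos.trans_le hk)
  exact hsup'.mono (by simpa only [zero_add] using Ioo_prod_subset_timeErosion 0 T Ω)
end

section
/- Let u be a viscosity subsolution of F(Hw) = e^{∂_t w + G(t,z,w)} g(z) in Ω_T. Then for every t₀ ∈ (0,T), the function z ↦ u(t₀,z) satisfies F(H u(t₀,·)) ≥ 0 in the viscosity sense in Ω, i.e., for every z₀ ∈ Ω and every upper test function q for u(t₀,·) at z₀, the eigenvalue vector λ(Hq(z₀)) lies in cl(Γ); equivalently, u(t₀,·) is Γ-subharmonic in Ω. -/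
open Filter Topology Set

/-!
Let `q` be an upper test function for `u(t₀, ·)` at `z₀`. After adding `ε‖z - z₀‖²`
(Euclidean norm) it touches
`u(t₀, ·)` only at `z₀`, and then for every small compact neighbourhood of `(t₀, z₀)` the penalty
`k(t - t₀)²` with `k` large forces `u - q - k(t - t₀)²` to have an interior maximum. At such maxima
the subsolution property says that the complex Hessian of `q` has its eigenvalues in `cl(Γ)`,
whatever the (possibly huge) time derivative of the test function is. The maxima accumulate at
`(t₀, z₀)`, and the matrices with eigenvalues in `cl(Γ)` form a closed set because the unitary group
is compact; so one may pass to the limit, first in the maximum points and then in `ε`.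
-/

section PenalizedMaximum

variable {X : Type*} [TopologicalSpace X] {w φ : X → ℝ}

theorem exists_forall_lt_mul_of_isCompact {K : Set X} (hK : IsCompact K)
    (hw : UpperSemicontinuousOn w K) (hφ : LowerSemicontinuousOn φ K) (hφ_nonneg : ∀ x ∈ K, 0 ≤ φ x)
    (hneg : ∀ x ∈ K, φ x = 0 → w x < 0) : ∃ k, ∀ x ∈ K, w x < k * φ x := by
  have hL : IsCompact (K ∩ w ⁻¹' Ici 0) := hw.isCompact_inter_preimage_Ici hK 0
  rcases (K ∩ w ⁻¹' Ici 0).eq_empty_or_nonempty with hempty | hne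
  · refine ⟨0, fun x hx => ?_⟩
    have hx' : x ∉ K ∩ w ⁻¹' Ici 0 := hempty ▸ notMem_empty x
    simpa [hx] using hx'
  · obtain ⟨a, ha, hmax⟩ := (hw.mono inter_subset_left).exists_isMaxOn hne hL
    obtain ⟨b, hb, hmin⟩ := (hφ.mono inter_subset_left).exists_isMinOn hne hL
    have hφb : 0 < φ b := (hφ_nonneg b hb.1).lt_of_ne' fun h => (hneg b hb.1 h).not_ge hb.2
    have hwa : 0 ≤ w a := ha.2
    refine ⟨(w a + 1) / φ b, fun x hx => ?_⟩
    rcases lt_or_ge (w x) 0 with hwx | hwx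
    · exact hwx.trans_le (mul_nonneg (by positivity) (hφ_nonneg x hx))
    · calc w x ≤ w a := hmax ⟨hx, hwx⟩
        _ < w a + 1 := lt_add_one _
        _ = (w a + 1) / φ b * φ b := (div_mul_cancel₀ _ hφb.ne').symm
        _ ≤ (w a + 1) / φ b * φ x :=
          mul_le_mul_of_nonneg_left (hmin ⟨hx, hwx⟩) (by positivity)

theorem frequently_exists_isLocalMax_sub_mul [LocallyCompactSpace X] {x₀ : X}
    (hw : ∀ᶠ x in 𝓝 x₀, UpperSemicontinuousAt w x) (hφ : ∀ᶠ x in 𝓝 x₀, ContinuousAt φ x)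
    (hφ_nonneg : ∀ᶠ x in 𝓝 x₀, 0 ≤ φ x) (hφ₀ : φ x₀ = 0)
    (hlt : ∀ᶠ x in 𝓝[≠] x₀, φ x = 0 → w x < w x₀) :
    ∃ᶠ x in 𝓝 x₀, ∃ k, IsLocalMax (fun y => w y - k * φ y) x := by
  refine frequently_iff.2 fun {V} hV => ?_
  obtain ⟨K, hK_nhds, hK_sub, hK⟩ := local_compact_nhds
    (hw.and <| hφ.and <| hφ_nonneg.and <| (eventually_nhdsWithin_iff.1 hlt).and hV)
  have hw_usc (k : ℝ) : UpperSemicontinuousOn (fun x => w x + -(k * φ x)) K := fun x hx =>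
    ((hK_sub hx).1.add
      ((hK_sub hx).2.1.const_mul k).neg.upperSemicontinuousAt).upperSemicontinuousWithinAt K
  have hφ_cont : ContinuousOn φ K := fun x hx => (hK_sub hx).2.1.continuousWithinAt
  have hx₀ : x₀ ∈ interior K := mem_interior_iff_mem_nhds.2 hK_nhds
  obtain ⟨k, hk⟩ : ∃ k, ∀ x ∈ K \ interior K, w x + -w x₀ < k * φ x := by
    refine exists_forall_lt_mul_of_isCompact (hK.diff isOpen_interior) (fun x hx => ?_)
      (hφ_cont.mono sdiff_subset).lowerSemicontinuousOn
      (fun x hx => (hK_sub hx.1).2.2.1) fun x hx hφx => ?_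
    · exact ((hK_sub hx.1).1.add
        continuousAt_const.upperSemicontinuousAt).upperSemicontinuousWithinAt _
    · have hne : x ≠ x₀ := fun h => hx.2 (h ▸ hx₀)
      linarith [(hK_sub hx.1).2.2.2.1 hne hφx]
  obtain ⟨x, hxK, hmax⟩ := (hw_usc k).exists_isMaxOn ⟨x₀, interior_subset hx₀⟩ hK
  have hge : w x₀ ≤ w x - k * φ x := by
    simpa [hφ₀, sub_eq_add_neg] using hmax (interior_subset hx₀)
  have hx_int : x ∈ interior K := by
    by_contra hx
    linarith [hk x ⟨hxK, hx⟩]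
  refine ⟨x, (hK_sub hxK).2.2.2.2, k, ?_⟩
  simpa only [sub_eq_add_neg] using hmax.isLocalMax (mem_interior_iff_mem_nhds.1 hx_int)

end PenalizedMaximum

section Permutation

variable {ι α : Type*}

theorem exists_perm_eq_comp_of_map_univ_eq [Fintype ι] {a b : ι → α}
    (h : Finset.univ.val.map a = Finset.univ.val.map b) : ∃ σ : Equiv.Perm ι, a = b ∘ σ := by
  classical
  have hcard (c : α) : Fintype.card {i // a i = c} = Fintype.card {i // b i = c} := by
    simpa [Multiset.count_map, Fintype.card_subtype, Finset.card, eq_comm] using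
      congrArg (Multiset.count c) h
  let e (c : α) : {i // a i = c} ≃ {i // b i = c} := Fintype.equivOfCardEq (hcard c)
  exact ⟨Equiv.ofFiberEquiv e, funext fun i => (Equiv.ofFiberEquiv_map e i).symm⟩

theorem comp_perm_mem_closure [TopologicalSpace α] {S : Set (ι → α)}
    (hS : ∀ σ : Equiv.Perm ι, ∀ x ∈ S, x ∘ σ ∈ S) (σ : Equiv.Perm ι) :
    ∀ x ∈ closure S, x ∘ σ ∈ closure S :=
  fun _ hx => map_mem_closure (f := (· ∘ σ)) (Pi.continuous_precomp σ) hx (hS σ)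

end Permutation

section HermitianEigenvalues

open Matrix Unitary

variable {ι 𝕜 : Type*} [DecidableEq ι] [RCLike 𝕜] {S : Set (ι → ℝ)}

theorem isClosedEmbedding_diagonal_ofReal :
    IsClosedEmbedding fun d : ι → ℝ => diagonal (RCLike.ofReal ∘ d : ι → 𝕜) := by
  refine Function.LeftInverse.isClosedEmbedding (f := fun A i => RCLike.re (A i i))
    (fun d => ?_) ?_ ?_
  · simp
  · exact continuous_pi fun i => RCLike.continuous_re.comp (continuous_id.matrix_elem i i)
  · refine Continuous.matrix_diagonal (continuous_pi fun i => ?_)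
    exact RCLike.continuous_ofReal.comp (continuous_apply i)

variable [Fintype ι]

/-- The Hermitian matrices with eigenvalue vector in `S`. Mathlib fixes an ordering of the
eigenvalues, so this is the intrinsic notion `λ(A) ∈ S` only when `S` is invariant under
permutations. -/
def hermitianEigenvalueSet (𝕜 : Type*) [RCLike 𝕜] (S : Set (ι → ℝ)) : Set (Matrix ι ι 𝕜) :=
  {A | ∃ hA : A.IsHermitian, hA.eigenvalues ∈ S}

theorem exists_perm_eigenvalues_eq_comp {A : Matrix ι ι 𝕜} (hA : A.IsHermitian) {d : ι → ℝ}
    (h : A.charpoly = (diagonal (RCLike.ofReal ∘ d : ι → 𝕜)).charpoly) :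
    ∃ σ : Equiv.Perm ι, hA.eigenvalues = d ∘ σ := by
  have hroots : Finset.univ.val.map (RCLike.ofReal ∘ hA.eigenvalues : ι → 𝕜) =
      Finset.univ.val.map (RCLike.ofReal ∘ d) := by
    rw [← hA.roots_charpoly_eq_eigenvalues, h, charpoly_diagonal, Polynomial.roots_prod _ _
      (Finset.prod_ne_zero_iff.2 fun _ _ => Polynomial.X_sub_C_ne_zero _)]
    simp
  refine exists_perm_eq_comp_of_map_univ_eq ?_
  simpa [Function.comp_def] using congrArg (Multiset.map RCLike.re) hroots

theorem charpoly_conjStarAlgAut {R : Type*} [CommRing R] [StarRing R]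
    (U : unitary (Matrix ι ι R)) (A : Matrix ι ι R) :
    (conjStarAlgAut R _ U A).charpoly = A.charpoly := by
  rw [conjStarAlgAut_apply, charpoly_mul_comm, ← mul_assoc, Unitary.coe_star_mul_self, one_mul]

theorem mem_hermitianEigenvalueSet_iff_exists_conj
    (hS : ∀ σ : Equiv.Perm ι, ∀ x ∈ S, x ∘ σ ∈ S) {A : Matrix ι ι 𝕜} :
    A ∈ hermitianEigenvalueSet 𝕜 S ↔ ∃ U : unitary (Matrix ι ι 𝕜),
      conjStarAlgAut 𝕜 _ (star U) A ∈ (fun d : ι → ℝ => diagonal (RCLike.ofReal ∘ d)) '' S := by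
  constructor
  · rintro ⟨hA, hmem⟩
    exact ⟨hA.eigenvectorUnitary, _, hmem, hA.conjStarAlgAut_star_eigenvectorUnitary.symm⟩
  · rintro ⟨U, d, hd, hconj⟩
    have hA_eq : A = conjStarAlgAut 𝕜 _ U (diagonal (RCLike.ofReal ∘ d)) := by
      rw [show Matrix.diagonal (RCLike.ofReal ∘ d) = _ from hconj, ← conjStarAlgAut_mul_apply]
      simp
    have hA : A.IsHermitian := by
      have hdiag : (diagonal (RCLike.ofReal ∘ d : ι → 𝕜)).IsHermitian :=
        isHermitian_diagonal_of_self_adjoint _ (funext fun i => by simp)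
      rw [hA_eq]
      exact IsSelfAdjoint.map hdiag _
    obtain ⟨σ, hσ⟩ := exists_perm_eigenvalues_eq_comp hA (d := d)
      (by rw [hA_eq, charpoly_conjStarAlgAut])
    exact ⟨hA, hσ ▸ hS σ d hd⟩

theorem isCompact_unitary_matrix : IsCompact (unitary (Matrix ι ι 𝕜) : Set (Matrix ι ι 𝕜)) := by
  have hbox : IsCompact (univ.pi fun _ : ι => univ.pi fun _ : ι => Metric.closedBall (0 : 𝕜) 1) :=
    isCompact_univ_pi fun _ => isCompact_univ_pi fun _ => isCompact_closedBall _ _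
  refine hbox.of_isClosed_subset (isClosed_unitary (R := Matrix ι ι 𝕜))
    fun U hU i _ j _ => ?_
  exact mem_closedBall_zero_iff.2 (entry_norm_bound_of_unitary hU i j)

theorem isClosed_hermitianEigenvalueSet (hS : ∀ σ : Equiv.Perm ι, ∀ x ∈ S, x ∘ σ ∈ S)
    (hS_closed : IsClosed S) : IsClosed (hermitianEigenvalueSet 𝕜 S) := by
  have : CompactSpace (unitary (Matrix ι ι 𝕜)) :=
    isCompact_iff_compactSpace.1 isCompact_unitary_matrix
  have hconj : Continuous fun p : Matrix ι ι 𝕜 × unitary (Matrix ι ι 𝕜) =>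
      conjStarAlgAut 𝕜 _ (star p.2) p.1 := by
    simp only [conjStarAlgAut_star_apply]
    fun_prop
  have hdiag := isClosedEmbedding_diagonal_ofReal (𝕜 := 𝕜).isClosedMap _ hS_closed
  convert isClosedMap_fst_of_compactSpace _ (hdiag.preimage hconj) using 1
  ext A
  simp [mem_hermitianEigenvalueSet_iff_exists_conj hS]

end HermitianEigenvalues

theorem exists_contDiff_eq_zero_pos_of_ne {E : Type*} [NormedAddCommGroup E] [NormedSpace ℝ E]
    [FiniteDimensional ℝ E] {m : WithTop ℕ∞} (x₀ : E) :
    ∃ N : E → ℝ, ContDiff ℝ m N ∧ N x₀ = 0 ∧ ∀ x ≠ x₀, 0 < N x := by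
  refine ⟨fun x => ‖toEuclidean (x - x₀)‖ ^ 2, ?_, by simp, fun x hx => ?_⟩
  · exact (toEuclidean.contDiff.comp (contDiff_id.sub contDiff_const)).norm_sq ℝ
  · have : toEuclidean (x - x₀) ≠ 0 := by simpa [sub_eq_zero] using hx
    positivity

section ComplexHessian

variable {n : ℕ} {p q : (Fin n → ℂ) → ℝ} {z : Fin n → ℂ}

theorem complexHessian_add (hp : ContDiffAt ℝ 2 p z) (hq : ContDiffAt ℝ 2 q z) :
    complexHessian (fun z => p z + q z) z = complexHessian p z + complexHessian q z := by
  ext j k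
  have hD2 : iteratedFDeriv ℝ 2 (fun z => p z + q z) z =
      iteratedFDeriv ℝ 2 p z + iteratedFDeriv ℝ 2 q z := iteratedFDeriv_add_apply (i := 2) hp hq
  simp only [complexHessian, hD2, Matrix.add_apply, _root_.add_apply]
  push_cast
  ring

theorem complexHessian_const_mul (c : ℝ) (hq : ContDiffAt ℝ 2 q z) :
    complexHessian (fun z => c * q z) z = c • complexHessian q z := by
  ext j k
  have hD2 : iteratedFDeriv ℝ 2 (fun z => c * q z) z = c • iteratedFDeriv ℝ 2 q z :=
    iteratedFDeriv_const_smul_apply (i := 2) (a := c) (f := q) hq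
  simp only [complexHessian, hD2, Matrix.smul_apply, _root_.smul_apply,
    smul_eq_mul, Complex.real_smul]
  push_cast
  ring

theorem complexHessian_add_const (hp : ContDiffAt ℝ 2 p z) (c : ℝ) :
    complexHessian (fun z => p z + c) z = complexHessian p z := by
  have hconst : complexHessian (fun _ : Fin n → ℂ => c) z = 0 := by
    ext j k
    simp [complexHessian, iteratedFDeriv_const_of_ne]
  rw [complexHessian_add hp contDiffAt_const, hconst, add_zero]

theorem continuousAt_complexHessian (hp : ContDiffAt ℝ 2 p z) :
    ContinuousAt (complexHessian p) z := by
  have hcont (v : Fin 2 → Fin n → ℂ) : ContinuousAt (fun x => iteratedFDeriv ℝ 2 p x v) z :=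
    (ContinuousMultilinearMap.apply ℝ (fun _ : Fin 2 => Fin n → ℂ) ℝ v).continuous.continuousAt.comp
      (hp.continuousAt_iteratedFDeriv (k := 2) le_rfl)
  refine continuousAt_pi.2 fun j => continuousAt_pi.2 fun k => ?_
  exact (Complex.continuous_ofReal.continuousAt.comp
      (((hcont _).add (hcont _)).div_const 4)).add
    (continuousAt_const.mul (Complex.continuous_ofReal.continuousAt.comp
      (((hcont _).sub (hcont _)).div_const 4)))

end ComplexHessian

section Subsolution

variable {n : ℕ} {f : (Fin n → ℝ) → ℝ} {Γ : Set (Fin n → ℝ)}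

theorem mem_hermitianEigenvalueSet_of_coe_le_Fop {A : Matrix (Fin n) (Fin n) ℂ} {r : ℝ}
    (h : (r : EReal) ≤ Fop f Γ A) : A ∈ hermitianEigenvalueSet ℂ (closure Γ) := by
  unfold Fop at h
  split_ifs at h with hA hmem
  · exact ⟨hA, hmem⟩
  all_goals exact absurd h (EReal.bot_lt_coe r).not_ge

variable {G : ℝ → (Fin n → ℂ) → ℝ → ℝ} {g : (Fin n → ℂ) → ℝ} {D : Set (ℝ × (Fin n → ℂ))}
  {u : ℝ × (Fin n → ℂ) → ℝ}

theorem ParSubsolOn.complexHessian_mem_of_isLocalMax (hu : ParSubsolOn f Γ G g D u)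
    {p : ℝ × (Fin n → ℂ)} (hp : p ∈ D) {Q : ℝ × (Fin n → ℂ) → ℝ}
    (hQ : ∀ᶠ x in 𝓝 p, DifferentiableAt ℝ (fun t => Q (t, x.2)) x.1 ∧
      ContDiffAt ℝ 2 (fun z => Q (x.1, z)) x.2)
    (hmax : IsLocalMax (fun x => u x - Q x) p) :
    complexHessian (fun z => Q (p.1, z)) p.2 ∈ hermitianEigenvalueSet ℂ (closure Γ) := by
  have htest : IsUpperTestAt u (fun x => Q x + (u p - Q p)) p := by
    refine ⟨add_sub_cancel _ _, ?_, ?_⟩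
    · filter_upwards [hmax] with x hx
      linarith
    · filter_upwards [hQ] with x hx
      exact ⟨hx.1.add_const _, hx.2.add contDiffAt_const⟩
  have hmem := mem_hermitianEigenvalueSet_of_coe_le_Fop (hu.2 p hp _ htest)
  rwa [complexHessian_add_const hQ.self_of_nhds.2] at hmem

theorem ParSubsolOn.frequently_complexHessian_mem (hu : ParSubsolOn f Γ G g D u) (hD : IsOpen D)
    {t₀ : ℝ} {z₀ : Fin n → ℂ} (hp₀ : (t₀, z₀) ∈ D) {q : (Fin n → ℂ) → ℝ}
    (hq : ContDiffAt ℝ 2 q z₀) (hlt : ∀ᶠ z in 𝓝[≠] z₀, u (t₀, z) - q z < u (t₀, z₀) - q z₀) :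
    ∃ᶠ z in 𝓝 z₀, complexHessian q z ∈ hermitianEigenvalueSet ℂ (closure Γ) := by
  have hsnd : Tendsto Prod.snd (𝓝 (t₀, z₀)) (𝓝 z₀) := continuous_snd.tendsto _
  have hq_near : ∀ᶠ p in 𝓝 (t₀, z₀), ContDiffAt ℝ 2 q p.2 :=
    hsnd.eventually (hq.eventually (by simp))
  have hD_near : ∀ᶠ p in 𝓝 (t₀, z₀), p ∈ D := hD.mem_nhds hp₀
  have husc : ∀ᶠ p in 𝓝 (t₀, z₀), UpperSemicontinuousAt (fun p => u p + -q p.2) p := by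
    filter_upwards [hD_near, hq_near] with p hpD hqp
    have hu_usc : UpperSemicontinuousAt u p := by
      intro y hy
      simpa only [hD.nhdsWithin_eq hpD] using hu.1 p hpD y hy
    have hq_cont : ContinuousAt (fun p : ℝ × (Fin n → ℂ) => q p.2) p :=
      hqp.continuousAt.comp continuousAt_snd
    exact hu_usc.add hq_cont.neg.upperSemicontinuousAt
  have hstrict : ∀ᶠ p in 𝓝[≠] (t₀, z₀), (p.1 - t₀) ^ 2 = 0 →
      u p + -q p.2 < u (t₀, z₀) + -q z₀ := by
    rw [eventually_nhdsWithin_iff] at hlt ⊢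
    filter_upwards [hsnd.eventually hlt]
    rintro ⟨t, z⟩ hz hne ht
    obtain rfl : t = t₀ := sub_eq_zero.1 (pow_eq_zero_iff two_ne_zero |>.1 ht)
    exact hz fun h => hne (Prod.ext rfl h)
  have hfreq := frequently_exists_isLocalMax_sub_mul husc
    (.of_forall fun p => by fun_prop) (.of_forall fun p => sq_nonneg _) (by simp) hstrict
  refine hsnd.frequently ((hfreq.and_eventually (hD_near.and hq_near.eventually_nhds)).mono ?_)
  rintro p ⟨⟨k, hmax⟩, hpD, hqp⟩
  rw [← complexHessian_add_const hqp.self_of_nhds (k * (p.1 - t₀) ^ 2)]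
  refine hu.complexHessian_mem_of_isLocalMax hpD (Q := fun x => q x.2 + k * (x.1 - t₀) ^ 2) ?_ ?_
  · filter_upwards [hqp] with x hx
    exact ⟨by fun_prop, hx.add contDiffAt_const⟩
  · simpa only [sub_eq_add_neg, neg_add, add_assoc] using hmax

theorem stmt13_general (hΓ : ∀ σ : Equiv.Perm (Fin n), ∀ x ∈ Γ, x ∘ σ ∈ Γ) (hD : IsOpen D)
    (hu : ParSubsolOn f Γ G g D u) (t₀ : ℝ) :
    GammaSubharmonicOn Γ {z | (t₀, z) ∈ D} (fun z => u (t₀, z)) := by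
  rintro z₀ hz₀ q ⟨hq_eq, hq_ge, hq⟩
  change complexHessian q z₀ ∈ hermitianEigenvalueSet ℂ (closure Γ)
  have hclosed : IsClosed (hermitianEigenvalueSet ℂ (closure Γ)) :=
    isClosed_hermitianEigenvalueSet (comp_perm_mem_closure hΓ) isClosed_closure
  obtain ⟨N, hN, hN₀, hN_pos⟩ := exists_contDiff_eq_zero_pos_of_ne (m := 2) z₀
  have hperturbed (ε : ℝ) (hε : 0 < ε) : complexHessian q z₀ + ε • complexHessian N z₀ ∈
      hermitianEigenvalueSet ℂ (closure Γ) := by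
    have hεN : ContDiffAt ℝ 2 (fun z => ε * N z) z₀ := contDiffAt_const.mul hN.contDiffAt
    rw [← complexHessian_const_mul ε hN.contDiffAt, ← complexHessian_add hq hεN]
    refine hclosed.mem_of_frequently_of_tendsto
      (hu.frequently_complexHessian_mem hD hz₀ (hq.add hεN) ?_)
      (continuousAt_complexHessian (hq.add hεN))
    filter_upwards [nhdsWithin_le_nhds hq_ge, self_mem_nhdsWithin] with z hz hne
    linarith [mul_pos hε (hN_pos z hne), mul_eq_zero_of_right ε hN₀]
  have hlim : Tendsto (fun ε : ℝ => complexHessian q z₀ + ε • complexHessian N z₀)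
      (𝓝[>] 0) (𝓝 (complexHessian q z₀)) :=
    tendsto_nhdsWithin_of_tendsto_nhds (Continuous.tendsto' (by fun_prop) _ _ (by simp))
  exact hclosed.mem_of_tendsto hlim (eventually_mem_nhdsWithin.mono hperturbed)

end Subsolution

/-- time slices of a subsolution are Γ-subharmonic. -/
theorem stmt13
    {n : ℕ} (hn : 1 ≤ n) (Γ : Set (Fin n → ℝ)) (f : (Fin n → ℝ) → ℝ)
    (hΓ : IsGammaCone n Γ) (hf : IsHessianDensity n Γ f)
    (Ω : Set (Fin n → ℂ)) (hΩo : IsOpen Ω) (hΩb : Bornology.IsBounded Ω)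
    (hΩc : IsConnected Ω) (T : ℝ) (hT : 0 < T)
    (G : ℝ → (Fin n → ℂ) → ℝ → ℝ)
    (hGc : ContinuousOn (fun p : ℝ × (Fin n → ℂ) × ℝ => G p.1 p.2.1 p.2.2)
      (Set.Icc 0 T ×ˢ closure Ω ×ˢ Set.univ))
    (hGm : ∀ t z, Monotone (fun r => G t z r))
    (g : (Fin n → ℂ) → ℝ) (hgc : ContinuousOn g Ω)
    (hg0 : ∀ z ∈ Ω, 0 ≤ g z) (hgb : ∃ C, ∀ z ∈ Ω, g z ≤ C)
    (u : ℝ × (Fin n → ℂ) → ℝ)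
    (hsub : ParSubsolOn f Γ G g (Set.Ioo 0 T ×ˢ Ω) u) :
    ∀ t₀ ∈ Set.Ioo (0 : ℝ) T, GammaSubharmonicOn Γ Ω (fun z => u (t₀, z)) := by
  exact fun t₀ ht₀ z₀ hz₀ =>
    stmt13_general hΓ.2.2.2.1 (isOpen_Ioo.prod hΩo) hsub t₀ z₀ ⟨ht₀, hz₀⟩
end
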